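/- Let L ∈ 𝒩. Then there exist λ ∈ ℂ and three times continuously differentiable functions θ, u : [0,L] → ℂ, not both identically zero, satisfying −u′(x) − u‴(x) = λ·θ(x) and −θ′(x) − θ‴(x) = λ·u(x) for all x ∈ [0,L], the boundary conditions θ(0) = θ(L) = θ′(0) = θ′(L) = 0 and u(0) = u(L) = u′(L) = 0, and additionally u″(L) = 0. -/

import Mathlib

open Set

/-- The set 𝒩 = { (2π/√3)·√(k² + k·l + l²) : k, l positive integers } of critical lengths. -/
def criticalN : Set ℝ :=
  {x | ∃ k l : ℕ, 0 < k ∧ 0 < l ∧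
    x = (2 * Real.pi / Real.sqrt 3) * Real.sqrt ((k : ℝ)^2 + (k : ℝ) * (l : ℝ) + (l : ℝ)^2)}

/-!
The idea is to build a single function `v` that solves `-v' - v''' = λ v` on all of `ℝ`, is
quasi-periodic, `v (x + L) = c v x`, and satisfies `v 0 = v' 0 = 0`; quasi-periodicity then gives
`v L = v' L = 0` as well. Since the operator is odd in the derivative, it anticommutes with the
reflection `x ↦ L - x`, so that `θ x = v x + c v (L - x)` and `u x = v x - c v (L - x)` solve the
coupled system. The last condition is quasi-periodicity again: `u'' L = v'' L - c v'' 0 = 0`.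

Such a `v` is a combination of `exp (p x)`, `exp (q x)`, `exp (r x)` for the roots `p, q, r` of
`m ^ 3 + m + λ`, provided these are distinct and `p L, q L, r L` agree modulo `2πi`. Writing the
differences of consecutive roots as `2πik / L` and `2πil / L`, the condition `p + q + r = 0`
determines the roots, and `pq + qr + rp = 1` says exactly that `3 L² = 4π² (k² + kl + l²)`.
-/

theorem iteratedDeriv_left_eq_zero_of_eqOn_Icc {E : Type*} [NormedAddCommGroup E]
    [NormedSpace ℝ E] {f : ℝ → E} {n : ℕ} {a b : ℝ} (hf : ContDiffAt ℝ n f a) (hab : a < b)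
    (h : EqOn f 0 (Icc a b)) : iteratedDeriv n f a = 0 := by
  have ha : a ∈ Icc a b := left_mem_Icc.2 hab.le
  rw [← iteratedDerivWithin_eq_iteratedDeriv (uniqueDiffOn_Icc hab) hf ha,
    iteratedDerivWithin_congr h ha, iteratedDerivWithin_const_zero]

section Quasiperiodic

/-- `f` is quasi-periodic with period `L` and multiplier `c`. This is the property that transports
the behaviour of a mode at `0` to the other end `L` of the interval. -/
def IsQuasiperiodic {G E R : Type*} [Add G] [SMul R E] (c : R) (L : G) (f : G → E) : Prop :=
  ∀ x, f (x + L) = c • f x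

theorem IsQuasiperiodic.apply_period {G E R : Type*} [AddZeroClass G] [SMul R E] {c : R} {L : G}
    {f : G → E} (hf : IsQuasiperiodic c L f) : f L = c • f 0 := by
  simpa only [zero_add] using hf 0

theorem IsQuasiperiodic.apply_period_eq_zero {G E R : Type*} [AddZeroClass G] [Zero E]
    [SMulZeroClass R E] {c : R} {L : G} {f : G → E} (hf : IsQuasiperiodic c L f) (h0 : f 0 = 0) :
    f L = 0 := by
  rw [hf.apply_period, h0, smul_zero]

protected theorem IsQuasiperiodic.deriv {𝕜 E R : Type*} [NontriviallyNormedField 𝕜]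
    [NormedAddCommGroup E] [NormedSpace 𝕜 E] [Monoid R] [DistribMulAction R E]
    [SMulCommClass 𝕜 R E] [ContinuousConstSMul R E] {c : R} {L : 𝕜} {f : 𝕜 → E}
    (hf : IsQuasiperiodic c L f) (hd : Differentiable 𝕜 f) : IsQuasiperiodic c L (deriv f) := by
  intro x
  rw [← deriv_comp_add_const, funext hf, deriv_fun_const_smul c (hd x)]

end Quasiperiodic

section Reflection

/-- The sum of `f` and `a` times its reflection in the midpoint of `[0, L]`. With opposite values
of `a` these are the two components of a mode of the coupled system. -/
def addReflection {G E R : Type*} [Sub G] [Add E] [SMul R E] (a : R) (L : G) (f : G → E) : G → E :=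
  fun x => f x + a • f (L - x)

section Algebra

variable {G E R : Type*} [AddGroup G] [AddCommGroup E]

theorem addReflection_apply_zero_eq_zero [SMulZeroClass R E] {a : R} {L : G} {f : G → E}
    (h0 : f 0 = 0) (hL : f L = 0) : addReflection a L f 0 = 0 := by
  simp only [addReflection, sub_zero, h0, hL, smul_zero, add_zero]

theorem addReflection_apply_self_eq_zero [SMulZeroClass R E] {a : R} {L : G} {f : G → E}
    (h0 : f 0 = 0) (hL : f L = 0) : addReflection a L f L = 0 := by
  simp only [addReflection, sub_self, h0, hL, smul_zero, add_zero]

theorem IsQuasiperiodic.addReflection_neg_apply_period [Ring R] [Module R E] {c : R} {L : G}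
    {f : G → E} (hf : IsQuasiperiodic c L f) : addReflection (-c) L f L = 0 := by
  rw [addReflection, sub_self, hf.apply_period, neg_smul, add_neg_cancel]

theorem addReflection_add_addReflection_neg [Ring R] [Module R E] (a : R) (L : G) (f : G → E) :
    addReflection a L f + addReflection (-a) L f = 2 • f := by
  funext x
  simp only [addReflection, neg_smul, Pi.add_apply, Pi.smul_apply]
  abel

theorem addReflection_const_smul [CommRing R] [Module R E] (a b : R) (L : G) (f : G → E) :
    addReflection a L (b • f) = b • addReflection a L f := by
  funext x
  simp only [addReflection, Pi.smul_apply, smul_add, smul_comm a b]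

end Algebra

variable {𝕜 E R : Type*} [NontriviallyNormedField 𝕜] [NormedAddCommGroup E] [NormedSpace 𝕜 E]
  [Ring R] [Module R E] [SMulCommClass 𝕜 R E] [ContinuousConstSMul R E]
  {a : R} {L : 𝕜} {f : 𝕜 → E}

theorem contDiff_addReflection {n : WithTop ℕ∞} (hf : ContDiff 𝕜 n f) :
    ContDiff 𝕜 n (addReflection a L f) :=
  hf.add ((hf.comp (contDiff_const.sub contDiff_id)).const_smul a)

theorem deriv_addReflection (hf : Differentiable 𝕜 f) :
    deriv (addReflection a L f) = addReflection (-a) L (deriv f) := by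
  funext x
  have hrefl : Differentiable 𝕜 fun x => f (L - x) := hf.comp (differentiable_id.const_sub L)
  unfold addReflection
  rw [deriv_fun_add (hf x) ((hrefl x).fun_const_smul a), deriv_fun_const_smul a (hrefl x),
    deriv_comp_const_sub, smul_neg, neg_smul]

end Reflection

section KdV

variable {𝕜 E : Type*} [NontriviallyNormedField 𝕜] [NormedAddCommGroup E] [NormedSpace 𝕜 E]

/-- The linear Korteweg-de Vries operator `f ↦ -f' - f'''`, both equations of the linearized
Boussinesq system being of the form `kdvOp f = λ • g`. -/
noncomputable def kdvOp (f : 𝕜 → E) : 𝕜 → E :=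
  fun x => -deriv f x - deriv (deriv (deriv f)) x

theorem kdvOp_addReflection {R : Type*} [Ring R] [Module R E] [SMulCommClass 𝕜 R E]
    [ContinuousConstSMul R E] {a : R} {L : 𝕜} {f : 𝕜 → E} (hf : ContDiff 𝕜 3 f) :
    kdvOp (addReflection a L f) = addReflection (-a) L (kdvOp f) := by
  have hf₁ : ContDiff 𝕜 2 (deriv f) := hf.deriv'
  have hf₂ : ContDiff 𝕜 1 (deriv (deriv f)) := hf₁.deriv'
  funext x
  unfold kdvOp
  simp only [deriv_addReflection (hf.differentiable three_ne_zero),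
    deriv_addReflection (hf₁.differentiable two_ne_zero),
    deriv_addReflection (hf₂.differentiable one_ne_zero), neg_neg]
  simp only [addReflection, smul_sub, smul_neg, neg_smul]
  abel

end KdV

/-- A quasi-periodic eigenfunction of the linear Korteweg-de Vries operator with a zero of order
exactly two at `0`. Its restriction to `[0, L]` satisfies the boundary conditions
`v 0 = v L = v' 0 = v' L = 0` that Rosier found to be compatible with a nonzero eigenfunction only
for critical `L`. -/
structure IsCriticalMode (L : ℝ) (c lam : ℂ) (v : ℝ → ℂ) : Prop where
  contDiff : ContDiff ℝ 3 v
  isQuasiperiodic : IsQuasiperiodic c L v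
  kdvOp_eq : kdvOp v = lam • v
  apply_zero : v 0 = 0
  deriv_zero : deriv v 0 = 0
  deriv_deriv_zero_ne : deriv (deriv v) 0 ≠ 0

namespace IsCriticalMode

variable {L : ℝ} {c lam : ℂ} {v : ℝ → ℂ}

theorem differentiable (hv : IsCriticalMode L c lam v) : Differentiable ℝ v :=
  hv.contDiff.differentiable three_ne_zero

theorem differentiable_deriv (hv : IsCriticalMode L c lam v) : Differentiable ℝ (deriv v) :=
  ContDiff.differentiable (n := 2) hv.contDiff.deriv' two_ne_zero

theorem isQuasiperiodic_deriv (hv : IsCriticalMode L c lam v) : IsQuasiperiodic c L (deriv v) :=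
  hv.isQuasiperiodic.deriv hv.differentiable

theorem apply_period (hv : IsCriticalMode L c lam v) : v L = 0 :=
  hv.isQuasiperiodic.apply_period_eq_zero hv.apply_zero

theorem deriv_period (hv : IsCriticalMode L c lam v) : deriv v L = 0 :=
  hv.isQuasiperiodic_deriv.apply_period_eq_zero hv.deriv_zero

theorem kdvOp_addReflection_eq (hv : IsCriticalMode L c lam v) (a : ℂ) :
    kdvOp (addReflection a L v) = lam • addReflection (-a) L v := by
  rw [kdvOp_addReflection hv.contDiff, hv.kdvOp_eq, addReflection_const_smul]

theorem deriv_addReflection_zero (hv : IsCriticalMode L c lam v) (a : ℂ) :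
    deriv (addReflection a L v) 0 = 0 := by
  rw [deriv_addReflection hv.differentiable]
  exact addReflection_apply_zero_eq_zero hv.deriv_zero hv.deriv_period

theorem deriv_addReflection_period (hv : IsCriticalMode L c lam v) (a : ℂ) :
    deriv (addReflection a L v) L = 0 := by
  rw [deriv_addReflection hv.differentiable]
  exact addReflection_apply_self_eq_zero hv.deriv_zero hv.deriv_period

theorem deriv_deriv_addReflection_neg_period (hv : IsCriticalMode L c lam v) :
    deriv (deriv (addReflection (-c) L v)) L = 0 := by
  rw [deriv_addReflection hv.differentiable, deriv_addReflection hv.differentiable_deriv, neg_neg]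
  exact (hv.isQuasiperiodic_deriv.deriv hv.differentiable_deriv).addReflection_neg_apply_period

theorem not_eqOn_zero (hv : IsCriticalMode L c lam v) (hL : 0 < L) : ¬EqOn v 0 (Icc 0 L) := by
  intro h
  have hv₂ : ContDiffAt ℝ (2 : ℕ) v 0 := (hv.contDiff.of_le (by norm_num)).contDiffAt
  have h₂ : iteratedDeriv 2 v 0 = 0 := iteratedDeriv_left_eq_zero_of_eqOn_Icc hv₂ hL h
  rw [iteratedDeriv_eq_iterate] at h₂
  exact hv.deriv_deriv_zero_ne h₂

theorem not_addReflection_eq_zero (hv : IsCriticalMode L c lam v) (hL : 0 < L) (a : ℂ) :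
    ¬∀ x ∈ Icc 0 L, addReflection a L v x = 0 ∧ addReflection (-a) L v x = 0 := by
  refine fun h => hv.not_eqOn_zero hL fun x hx => ?_
  have hsum : addReflection a L v x + addReflection (-a) L v x = 2 • v x :=
    congrFun (addReflection_add_addReflection_neg a L v) x
  rw [(h x hx).1, (h x hx).2, add_zero] at hsum
  exact (smul_eq_zero.1 hsum.symm).resolve_left two_ne_zero

end IsCriticalMode

section ExpSum

variable {ι : Type*} [Fintype ι] {a m : ι → ℂ}

/-- The exponential sum with coefficients `a` and exponents `m`, as a function on the real line:
the general solution of a constant-coefficient linear equation with simple characteristic roots. -/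
noncomputable def expSum (a m : ι → ℂ) (x : ℝ) : ℂ :=
  ∑ j, a j * Complex.exp (m j * x)

theorem expSum_zero (a m : ι → ℂ) : expSum a m 0 = ∑ j, a j := by
  simp only [expSum, Complex.ofReal_zero, mul_zero, Complex.exp_zero, mul_one]

theorem contDiff_expSum {n : WithTop ℕ∞} (a m : ι → ℂ) : ContDiff ℝ n (expSum a m) :=
  ContDiff.sum fun _ _ =>
    contDiff_const.mul (contDiff_const.mul Complex.ofRealCLM.contDiff).cexp

theorem deriv_expSum (a m : ι → ℂ) : deriv (expSum a m) = expSum (a * m) m := by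
  funext x
  have hterm (j : ι) : HasDerivAt (fun y : ℝ => a j * Complex.exp (m j * y))
      ((a * m) j * Complex.exp (m j * x)) x := by
    convert! ((Complex.ofRealCLM.hasDerivAt.const_mul (m j)).cexp).const_mul (a j) using 1
    simp only [Pi.mul_apply, Complex.ofRealCLM_apply, Complex.ofReal_one]
    ring
  exact (HasDerivAt.fun_sum fun j _ => hterm j).deriv

theorem isQuasiperiodic_expSum {c : ℂ} {L : ℝ} (hm : ∀ j, Complex.exp (m j * L) = c) :
    IsQuasiperiodic c L (expSum a m) := by
  intro x
  simp only [expSum, smul_eq_mul, Finset.mul_sum]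
  refine Finset.sum_congr rfl fun j _ => ?_
  rw [Complex.ofReal_add, mul_add, Complex.exp_add, hm j]
  ring

theorem kdvOp_expSum {lam : ℂ} (hm : ∀ j, -m j - m j ^ 3 = lam) :
    kdvOp (expSum a m) = lam • expSum a m := by
  funext x
  simp only [kdvOp, deriv_expSum, expSum, Pi.smul_apply, smul_eq_mul, Pi.mul_apply,
    Finset.mul_sum, ← Finset.sum_neg_distrib, ← Finset.sum_sub_distrib]
  refine Finset.sum_congr rfl fun j _ => ?_
  rw [← hm j]
  ring

theorem isCriticalMode_expSum {L : ℝ} {c lam : ℂ} (hexp : ∀ j, Complex.exp (m j * L) = c)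
    (hroot : ∀ j, -m j - m j ^ 3 = lam) (h₀ : ∑ j, a j = 0) (h₁ : ∑ j, a j * m j = 0)
    (h₂ : ∑ j, a j * m j ^ 2 ≠ 0) : IsCriticalMode L c lam (expSum a m) where
  contDiff := contDiff_expSum a m
  isQuasiperiodic := isQuasiperiodic_expSum hexp
  kdvOp_eq := kdvOp_expSum hroot
  apply_zero := by rw [expSum_zero, h₀]
  deriv_zero := by simpa only [deriv_expSum, expSum_zero, Pi.mul_apply] using h₁
  deriv_deriv_zero_ne := by
    simpa only [deriv_expSum, expSum_zero, Pi.mul_apply, mul_assoc, sq] using h₂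

end ExpSum

section CriticalLength

-- The coefficients are, up to a common factor, the Lagrange weights of the three nodes: they
-- annihilate `1` and `m`, and pair with `m ^ 2` to the Vandermonde determinant.
theorem exists_isCriticalMode_of_roots {L : ℝ} {p q r : ℂ} (hpq : p ≠ q) (hqr : q ≠ r)
    (hrp : r ≠ p) (h₁ : p + q + r = 0) (h₂ : p * q + q * r + r * p = 1)
    (hq : Complex.exp (q * L) = Complex.exp (p * L))
    (hr : Complex.exp (r * L) = Complex.exp (p * L)) :
    ∃ c lam v, IsCriticalMode L c lam v := by
  have hroot {m : ℂ} (hm : (m - p) * (m - q) * (m - r) = 0) : -m - m ^ 3 = -(p * q * r) := by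
    linear_combination m * h₂ - m ^ 2 * h₁ - hm
  refine ⟨Complex.exp (p * L), -(p * q * r), expSum ![q - r, r - p, p - q] ![p, q, r],
    isCriticalMode_expSum ?_ ?_ ?_ ?_ ?_⟩
  · exact Fin.forall_fin_succ.2 ⟨rfl, Fin.forall_fin_two.2 ⟨hq, hr⟩⟩
  · exact Fin.forall_fin_succ.2 ⟨hroot (m := p) (by ring),
      Fin.forall_fin_two.2 ⟨hroot (m := q) (by ring), hroot (m := r) (by ring)⟩⟩
  · simp [Fin.sum_univ_three]
  · simp only [Fin.sum_univ_three, Matrix.cons_val]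
    ring
  · have hvandermonde : (q - r) * p ^ 2 + (r - p) * q ^ 2 + (p - q) * r ^ 2
        = -((p - q) * (q - r) * (r - p)) := by ring
    simp only [Fin.sum_univ_three, Matrix.cons_val, hvandermonde]
    exact neg_ne_zero.2 (mul_ne_zero (mul_ne_zero (sub_ne_zero.2 hpq) (sub_ne_zero.2 hqr))
      (sub_ne_zero.2 hrp))

theorem exp_mul_eq_exp_mul_of_sub_mul_eq {p q z : ℂ} {n : ℤ}
    (h : (q - p) * z = n * (2 * Real.pi * Complex.I)) :
    Complex.exp (q * z) = Complex.exp (p * z) :=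
  Complex.exp_eq_exp_iff_exists_int.2 ⟨n, by linear_combination h⟩

theorem exists_isCriticalMode_of_three_mul_sq_eq {L : ℝ} {k l : ℤ} (hL : L ≠ 0) (hk : k ≠ 0)
    (hl : l ≠ 0) (hkl : k + l ≠ 0)
    (hLkl : 3 * L ^ 2 = 4 * Real.pi ^ 2 * (k ^ 2 + k * l + l ^ 2)) :
    ∃ c lam v, IsCriticalMode L c lam v := by
  have hLc : (L : ℂ) ≠ 0 := Complex.ofReal_ne_zero.2 hL
  have hLklc : 3 * (L : ℂ) ^ 2 = 4 * Real.pi ^ 2 * (k ^ 2 + k * l + l ^ 2) := by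
    exact_mod_cast hLkl
  obtain ⟨s, hs⟩ : ∃ s : ℂ, 3 * s * L = 2 * Real.pi * Complex.I :=
    ⟨2 * Real.pi * Complex.I / (3 * L), by field_simp⟩
  have hs₀ : 3 * s ≠ 0 := left_ne_zero_of_mul (hs.trans_ne Complex.two_pi_I_ne_zero)
  have hs₂ : 3 * s ^ 2 * (k ^ 2 + k * l + l ^ 2) = -1 := by
    refine mul_left_cancel₀ (mul_ne_zero three_ne_zero (pow_ne_zero 2 hLc)) ?_
    linear_combination ((k : ℂ) ^ 2 + k * l + l ^ 2) * (3 * s * L + 2 * Real.pi * Complex.I) * hs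
      + hLklc + 4 * Real.pi ^ 2 * ((k : ℂ) ^ 2 + k * l + l ^ 2) * Complex.I_sq
  have hne {x y : ℂ} {n : ℤ} (hn : n ≠ 0) (hxy : y - x = 3 * s * n) : x ≠ y :=
    (sub_ne_zero.1 (hxy.trans_ne (mul_ne_zero hs₀ (Int.cast_ne_zero.2 hn)))).symm
  apply exists_isCriticalMode_of_roots (p := -(2 * k + l) * s) (q := (k - l) * s)
    (r := (k + 2 * l) * s)
  · exact hne hk (by ring)
  · exact hne hl (by ring)
  · exact (hne hkl (by push_cast; ring)).symm
  · ring
  · linear_combination -hs₂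
  · exact exp_mul_eq_exp_mul_of_sub_mul_eq (n := k) (by linear_combination k * hs)
  · exact exp_mul_eq_exp_mul_of_sub_mul_eq (n := k + l)
      (by push_cast; linear_combination (k + l) * hs)

theorem pos_of_mem_criticalN {L : ℝ} (hL : L ∈ criticalN) : 0 < L := by
  obtain ⟨k, l, hk, hl, rfl⟩ := hL
  positivity

theorem exists_isCriticalMode_of_mem_criticalN {L : ℝ} (hL : L ∈ criticalN) :
    ∃ c lam v, IsCriticalMode L c lam v := by
  have hL₀ : L ≠ 0 := (pos_of_mem_criticalN hL).ne'
  obtain ⟨k, l, hk, hl, hLkl⟩ := hL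
  refine exists_isCriticalMode_of_three_mul_sq_eq (k := k) (l := l) hL₀ (by lia) (by lia)
    (by lia) ?_
  rw [hLkl, mul_pow, div_pow, Real.sq_sqrt (by positivity), Real.sq_sqrt (by positivity)]
  push_cast
  ring

end CriticalLength

/-- If `L ∈ 𝒩`, the spectral problem for the linearized Boussinesq system with boundary
conditions `θ(0) = θ(L) = θ′(0) = θ′(L) = 0`, `u(0) = u(L) = u′(L) = 0` admits a nontrivial
solution satisfying the additional condition `deriv (deriv u) L = 0`. -/
theorem statement_1 (L : ℝ) (hLN : L ∈ criticalN) :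
    ∃ (lam : ℂ) (θ u : ℝ → ℂ),
      ContDiff ℝ 3 θ ∧ ContDiff ℝ 3 u ∧
      ¬(∀ x ∈ Icc (0 : ℝ) L, θ x = 0 ∧ u x = 0) ∧
      (∀ x ∈ Icc (0 : ℝ) L, -deriv u x - deriv (deriv (deriv u)) x = lam * θ x) ∧
      (∀ x ∈ Icc (0 : ℝ) L, -deriv θ x - deriv (deriv (deriv θ)) x = lam * u x) ∧
      θ 0 = 0 ∧ θ L = 0 ∧ deriv θ 0 = 0 ∧ deriv θ L = 0 ∧
      u 0 = 0 ∧ u L = 0 ∧ deriv u L = 0 ∧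
      deriv (deriv u) L = 0 := by
  obtain ⟨c, lam, v, hv⟩ := exists_isCriticalMode_of_mem_criticalN hLN
  have hode (a : ℂ) (x : ℝ) : kdvOp (addReflection a L v) x = lam * addReflection (-a) L v x :=
    congrFun (hv.kdvOp_addReflection_eq a) x
  have hode_neg (x : ℝ) : kdvOp (addReflection (-c) L v) x = lam * addReflection c L v x := by
    simpa only [neg_neg] using hode (-c) x
  have hzero (a : ℂ) : addReflection a L v 0 = 0 :=
    addReflection_apply_zero_eq_zero hv.apply_zero hv.apply_period
  have hperiod (a : ℂ) : addReflection a L v L = 0 :=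
    addReflection_apply_self_eq_zero hv.apply_zero hv.apply_period
  refine ⟨lam, addReflection c L v, addReflection (-c) L v, contDiff_addReflection hv.contDiff,
    contDiff_addReflection hv.contDiff, hv.not_addReflection_eq_zero (pos_of_mem_criticalN hLN) c,
    fun x _ => hode_neg x, fun x _ => hode c x, hzero c, hperiod c, hv.deriv_addReflection_zero c,
    hv.deriv_addReflection_period c, hzero (-c), hperiod (-c), hv.deriv_addReflection_period (-c),
    hv.deriv_deriv_addReflection_neg_period⟩
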